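/- arXiv:2011.03434 — 2 statements merged into one kernel-verified Lean document; each statement's English description precedes it below -/
import Mathlib

section
/- Let S be a stable matching in G* with level partitions A = A_0 ∪ ⋯ ∪ A_{n0−1} and B = B_0 ∪ ⋯ ∪ B_{n0−1}. Then G has no edge (a,b) with a ∈ A_i and b ∈ B_j where i ≥ j+2. -/
open Classical

noncomputable section

namespace PopMax

/-- A bipartite preference instance `G = (A ∪ B, E)`:
`E a b` says there is an edge between `a ∈ A` and `b ∈ B`;
`prefA a b b'` says `a` strictly prefers `b` to `b'`;
`prefB b a a'` says `b` strictly prefers `a` to `a'`. -/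
structure PrefSys (A : Type*) (B : Type*) where
  E : A → B → Prop
  prefA : A → B → B → Prop
  prefB : B → A → A → Prop

/-- Every node has a strict (linear) preference order over its neighbors. -/
def PrefSys.IsValid {A B : Type*} (I : PrefSys A B) : Prop :=
  (∀ a b, ¬ I.prefA a b b) ∧
  (∀ a b₁ b₂ b₃, I.prefA a b₁ b₂ → I.prefA a b₂ b₃ → I.prefA a b₁ b₃) ∧
  (∀ a b₁ b₂, I.E a b₁ → I.E a b₂ → b₁ ≠ b₂ → I.prefA a b₁ b₂ ∨ I.prefA a b₂ b₁) ∧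
  (∀ b a, ¬ I.prefB b a a) ∧
  (∀ b a₁ a₂ a₃, I.prefB b a₁ a₂ → I.prefB b a₂ a₃ → I.prefB b a₁ a₃) ∧
  (∀ b a₁ a₂, I.E a₁ b → I.E a₂ b → a₁ ≠ a₂ → I.prefB b a₁ a₂ ∨ I.prefB b a₂ a₁)

variable {A B : Type*}

/-- A matching: a set of pairwise disjoint edges. -/
def IsMatching (I : PrefSys A B) (M : Finset (A × B)) : Prop :=
  (∀ p ∈ M, I.E p.1 p.2) ∧
  (∀ p ∈ M, ∀ q ∈ M, p.1 = q.1 → p = q) ∧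
  (∀ p ∈ M, ∀ q ∈ M, p.2 = q.2 → p = q)

def matchedA (M : Finset (A × B)) (a : A) : Prop := ∃ b, (a, b) ∈ M
def matchedB (M : Finset (A × B)) (b : B) : Prop := ∃ a, (a, b) ∈ M

/-- A maximum matching: a matching of maximum cardinality. -/
def IsMaximumMatching (I : PrefSys A B) (M : Finset (A × B)) : Prop :=
  IsMatching I M ∧ ∀ N : Finset (A × B), IsMatching I N → N.card ≤ M.card

/-- A perfect matching matches all nodes. -/
def IsPerfectMatching (I : PrefSys A B) (M : Finset (A × B)) : Prop :=
  IsMatching I M ∧ (∀ a, matchedA M a) ∧ (∀ b, matchedB M b)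

/-- `a ∈ A` prefers matching `M` to matching `N`. -/
def prefersA (I : PrefSys A B) (a : A) (M N : Finset (A × B)) : Prop :=
  ∃ b, (a, b) ∈ M ∧ (¬ matchedA N a ∨ ∃ b', (a, b') ∈ N ∧ I.prefA a b b')

/-- `b ∈ B` prefers matching `M` to matching `N`. -/
def prefersB (I : PrefSys A B) (b : B) (M N : Finset (A × B)) : Prop :=
  ∃ a, (a, b) ∈ M ∧ (¬ matchedB N b ∨ ∃ a', (a', b) ∈ N ∧ I.prefB b a a')

/-- A node `u ∈ A ∪ B` prefers matching `M` to matching `N`. -/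
def prefers (I : PrefSys A B) (u : A ⊕ B) (M N : Finset (A × B)) : Prop :=
  match u with
  | Sum.inl a => prefersA I a M N
  | Sum.inr b => prefersB I b M N

/-- `φ(M,N)`: the number of nodes preferring `M` to `N`. -/
def phi [Fintype A] [Fintype B] (I : PrefSys A B) (M N : Finset (A × B)) : ℕ :=
  (Finset.univ.filter (fun u : A ⊕ B => prefers I u M N)).card

/-- `Δ(M,N) = φ(M,N) − φ(N,M)`. -/
def Delta [Fintype A] [Fintype B] (I : PrefSys A B) (M N : Finset (A × B)) : ℤ :=
  (phi I M N : ℤ) - (phi I N M : ℤ)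

/-- A popular max-matching: a maximum matching `M` with `Δ(M,N) ≥ 0`
for every maximum matching `N`. -/
def IsPopularMaxMatching [Fintype A] [Fintype B] (I : PrefSys A B)
    (M : Finset (A × B)) : Prop :=
  IsMaximumMatching I M ∧
    ∀ N : Finset (A × B), IsMaximumMatching I N → 0 ≤ Delta I M N

/-- The edge `(a,b) ∉ M` blocks `M`. -/
def Blocks (I : PrefSys A B) (M : Finset (A × B)) (a : A) (b : B) : Prop :=
  I.E a b ∧ (a, b) ∉ M ∧
  (¬ matchedA M a ∨ ∃ b', (a, b') ∈ M ∧ I.prefA a b b') ∧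
  (¬ matchedB M b ∨ ∃ a', (a', b) ∈ M ∧ I.prefB b a a')

/-- A stable matching: a matching with no blocking edge. -/
def IsStable (I : PrefSys A B) (S : Finset (A × B)) : Prop :=
  IsMatching I S ∧ ∀ a b, ¬ Blocks I S a b

/-- The edge weight `wt_M(a,b) ∈ {0, ±2}`. -/
def wt (I : PrefSys A B) (M : Finset (A × B)) (a : A) (b : B) : ℤ :=
  if Blocks I M a b then 2
  else if (∃ b', (a, b') ∈ M ∧ I.prefA a b' b) ∧ (∃ a', (a', b) ∈ M ∧ I.prefB b a' a) then -2
  else 0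

/-- The underlying simple graph on the node set `A ⊕ B`. -/
def graphOf (I : PrefSys A B) : SimpleGraph (A ⊕ B) :=
  SimpleGraph.fromRel (fun u w =>
    match u, w with
    | Sum.inl a, Sum.inr b => I.E a b
    | _, _ => False)

/-- The (undirected) edge `e` is an edge of the matching `M`. -/
def edgeInM (M : Finset (A × B)) (e : Sym2 (A ⊕ B)) : Prop :=
  ∃ a b, (a, b) ∈ M ∧ e = s(Sum.inl a, Sum.inr b)

/-- Consecutive edges alternate between `M` and `E ∖ M`. -/
def altRel (M : Finset (A × B)) (e f : Sym2 (A ⊕ B)) : Prop :=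
  edgeInM M e ↔ ¬ edgeInM M f

/-- An alternating path with respect to `M`. -/
def IsAltPath (I : PrefSys A B) (M : Finset (A × B)) {u w : A ⊕ B}
    (p : (graphOf I).Walk u w) : Prop :=
  p.IsPath ∧ List.Chain' (altRel M) p.edges

/-- An alternating cycle with respect to `M` (alternation also across the wrap-around). -/
def IsAltCycle (I : PrefSys A B) (M : Finset (A × B)) {w : A ⊕ B}
    (c : (graphOf I).Walk w w) : Prop :=
  c.IsCycle ∧ List.Chain' (altRel M) (c.edges ++ c.edges.take 1)

/-- `wt_M` as a function on undirected edges. -/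
def wtSym (I : PrefSys A B) (M : Finset (A × B)) : Sym2 (A ⊕ B) → ℤ :=
  Sym2.lift ⟨fun u w =>
      match u, w with
      | Sum.inl a, Sum.inr b => wt I M a b
      | Sum.inr b, Sum.inl a => wt I M a b
      | _, _ => 0,
    by rintro (a | b) (a' | b') <;> rfl⟩

/-- `wt_M(ρ) = Σ_{e ∈ ρ} wt_M(e)` for a walk `ρ`. -/
def wtWalk (I : PrefSys A B) (M : Finset (A × B)) {u w : A ⊕ B}
    (p : (graphOf I).Walk u w) : ℤ :=
  (p.edges.map (wtSym I M)).sum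

/-- The node `u ∈ A ∪ B` is unmatched in `M`. -/
def unmatchedNode (M : Finset (A × B)) : A ⊕ B → Prop
  | Sum.inl a => ¬ matchedA M a
  | Sum.inr b => ¬ matchedB M b

/-- The set of edges `(a,b) ∈ A × B` used by the walk `p`. -/
def pairsOf [Fintype A] [Fintype B] (I : PrefSys A B) {u w : A ⊕ B}
    (p : (graphOf I).Walk u w) : Finset (A × B) :=
  Finset.univ.filter (fun ab : A × B => s(Sum.inl ab.1, Sum.inr ab.2) ∈ p.edges)

/-- `M` is Pareto-optimal: no matching `N` has `φ(N,M) > 0` and `φ(M,N) = 0`. -/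
def IsParetoOptimal [Fintype A] [Fintype B] (I : PrefSys A B) (M : Finset (A × B)) : Prop :=
  ¬ ∃ N : Finset (A × B), IsMatching I N ∧ 0 < phi I N M ∧ phi I M N = 0

/-! ### The auxiliary instance `G*` -/

/-- `A* = {a_0, …, a_{n0−1} : a ∈ A}` where `n0 = |A|`. -/
abbrev AStar (A : Type*) [Fintype A] : Type _ := A × Fin (Fintype.card A)

/-- `B* = B̃ ∪ {d_1(a), …, d_{n0−1}(a) : a ∈ A}`; the dummy node `(a, j)`
(with `j : Fin (n0 − 1)`) stands for `d_{j+1}(a)`. -/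
abbrev BStar (A : Type*) (B : Type*) [Fintype A] : Type _ :=
  B ⊕ (A × Fin (Fintype.card A - 1))

/-- The auxiliary instance `G*` with its edges and preferences. -/
def starSys [Fintype A] (I : PrefSys A B) : PrefSys (AStar A) (BStar A B) where
  E := fun ai w =>
    match ai, w with
    | (a, _i), Sum.inl b => I.E a b
    | (a, i), Sum.inr (a', j) => a = a' ∧ ((i : ℕ) = (j : ℕ) ∨ (i : ℕ) = (j : ℕ) + 1)
  prefA := fun ai u v =>
    match ai, u, v with
    | (a, _i), Sum.inl b, Sum.inl b' => I.prefA a b b'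
    | (a, i), Sum.inl _b, Sum.inr (a', j) => a = a' ∧ (j : ℕ) = (i : ℕ)
    | (a, i), Sum.inr (a', j), Sum.inl _b => a = a' ∧ (j : ℕ) + 1 = (i : ℕ)
    | (a, i), Sum.inr (a', j), Sum.inr (a'', j') =>
        a = a' ∧ a = a'' ∧ (j : ℕ) + 1 = (i : ℕ) ∧ (j' : ℕ) = (i : ℕ)
  prefB := fun w x y =>
    match w, x, y with
    | Sum.inl b, (a, i), (a', i') =>
        (i' : ℕ) < (i : ℕ) ∨ ((i : ℕ) = (i' : ℕ) ∧ I.prefB b a a')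
    | Sum.inr (a, j), (a', i), (a'', i') =>
        a' = a ∧ a'' = a ∧ (i : ℕ) = (j : ℕ) ∧ (i' : ℕ) = (j : ℕ) + 1

/-- The projection `S ↦ S'`: delete edges incident to dummy nodes and replace
`(a_i, b̃)` by `(a, b)`. -/
def proj [Fintype A] [Fintype B] (S : Finset (AStar A × BStar A B)) : Finset (A × B) :=
  Finset.univ.filter (fun ab : A × B =>
    ∃ i : Fin (Fintype.card A), ((ab.1, i), (Sum.inl ab.2 : BStar A B)) ∈ S)

/-- `a ∈ A_i` for the level partition of `A` induced by a (stable) matching `S` in `G*`: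
for `i ≤ n0 − 2`, `a ∈ A_i` iff `(a_i, b̃) ∈ S` for some `b̃ ∈ B̃`;
`A_{n0−1}` consists of all remaining nodes of `A`. -/
def AtLevelA [Fintype A] (S : Finset (AStar A × BStar A B)) (a : A) (i : ℕ) : Prop :=
  (i + 1 < Fintype.card A ∧
     ∃ j : Fin (Fintype.card A), (j : ℕ) = i ∧
       ∃ b : B, ((a, j), (Sum.inl b : BStar A B)) ∈ S) ∨
  (i + 1 = Fintype.card A ∧
     ∀ j : Fin (Fintype.card A), (j : ℕ) + 1 < Fintype.card A →
       ∀ b : B, ((a, j), (Sum.inl b : BStar A B)) ∉ S)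

/-- `b ∈ B_i` for the level partition of `B` induced by a (stable) matching `S` in `G*`:
for `1 ≤ i ≤ n0 − 1`, `b ∈ B_i` iff `(a_i, b̃) ∈ S` for some `a ∈ A_i`;
`B_0` consists of all remaining nodes of `B`. -/
def AtLevelB [Fintype A] (S : Finset (AStar A × BStar A B)) (b : B) (i : ℕ) : Prop :=
  (1 ≤ i ∧ i < Fintype.card A ∧
     ∃ j : Fin (Fintype.card A), (j : ℕ) = i ∧
       ∃ a : A, AtLevelA S a i ∧ ((a, j), (Sum.inl b : BStar A B)) ∈ S) ∨
  (i = 0 ∧ ∀ j : Fin (Fintype.card A), 1 ≤ (j : ℕ) →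
       ∀ a : A, AtLevelA S a (j : ℕ) → ((a, j), (Sum.inl b : BStar A B)) ∉ S)


/-!
In a stable matching of `G*`, if `a ∈ A_i` then every copy `a_m` with `m < i` is matched to
`d_{m+1}(a)`, its last choice. Indeed, if `a_i` is matched in `B̃`, then it is not matched to its
first choice `d_i(a)`, which must therefore be matched to `a_{i-1}`, and one descends from there; if
`i = n0 - 1` and no earlier copy is matched in `B̃`, then `a_0` can only be matched to `d_1(a)`,
hence `a_1` only to `d_2(a)`, and so on upwards.

An edge `(a, b)` of `G` thus gives an edge of `G*` between `b̃` and `a_{i-1}`, who prefers `b̃`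
to its partner. As this edge does not block, `b̃` is matched to a copy with subscript at least
`i - 1`; and this subscript is the level of `b`.
-/

section Matching

variable {I : PrefSys A B} {M : Finset (A × B)} {a a' : A} {b b' : B}

theorem IsMatching.edge (hM : IsMatching I M) (h : (a, b) ∈ M) : I.E a b :=
  hM.1 _ h

theorem IsMatching.right_unique (hM : IsMatching I M) (h : (a, b) ∈ M) (h' : (a, b') ∈ M) :
    b = b' :=
  congrArg Prod.snd (hM.2.1 _ h _ h' rfl)

theorem IsMatching.left_unique (hM : IsMatching I M) (h : (a, b) ∈ M) (h' : (a', b) ∈ M) :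
    a = a' :=
  congrArg Prod.fst (hM.2.2 _ h _ h' rfl)

theorem IsStable.mem_of_forall_pref (hM : IsStable I M) (hE : I.E a b)
    (hA : ∀ b', (a, b') ∈ M → b' ≠ b → I.prefA a b b')
    (hB : ∀ a', (a', b) ∈ M → a' ≠ a → I.prefB b a a') :
    (a, b) ∈ M := by
  by_contra hab
  refine hM.2 a b ⟨hE, hab, or_iff_not_imp_left.2 fun ha => ?_, or_iff_not_imp_left.2 fun hb => ?_⟩
  · obtain ⟨b', hb'⟩ := not_not.1 ha
    exact ⟨b', hb', hA b' hb' (ne_of_mem_of_not_mem hb' hab <| congrArg (Prod.mk a) ·)⟩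
  · obtain ⟨a', ha'⟩ := not_not.1 hb
    exact ⟨a', ha', hB a' ha' (ne_of_mem_of_not_mem ha' hab <| congrArg (Prod.mk · b) ·)⟩

end Matching

section Dummies

variable [Fintype A] {I : PrefSys A B} {S : Finset (AStar A × BStar A B)} {a : A} {b : B}

/-- The favourite neighbor of the dummy node `d` in `G*`. With the indexing of `BStar`, where
`d = (a, j)` encodes `d_{j+1}(a)`, this is the copy `a_j`. -/
def lowerCopy (d : A × Fin (Fintype.card A - 1)) : AStar A :=
  (d.1, d.2.castLE (Nat.sub_le _ _))

/-- The other neighbor of the dummy node `d` in `G*`: the copy `a_{j+1}` when `d = (a, j)` encodes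
`d_{j+1}(a)`. -/
def upperCopy (d : A × Fin (Fintype.card A - 1)) : AStar A :=
  (d.1, ⟨d.2 + 1, by omega⟩)

theorem starSys_E_inr_iff {x : AStar A} {d : A × Fin (Fintype.card A - 1)} :
    (starSys I).E x (Sum.inr d) ↔ x = lowerCopy d ∨ x = upperCopy d := by
  simp only [starSys, lowerCopy, upperCopy, Prod.ext_iff, Fin.ext_iff, Fin.val_castLE,
    ← and_or_left]

theorem lowerCopy_injective : Function.Injective (lowerCopy (A := A)) := fun d d' h => by
  simpa only [lowerCopy, Prod.ext_iff, Fin.ext_iff, Fin.val_castLE] using h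

theorem lowerCopy_ne_upperCopy (d : A × Fin (Fintype.card A - 1)) :
    lowerCopy d ≠ upperCopy d := by
  simp [lowerCopy, upperCopy, Fin.ext_iff]

theorem starSys_prefB_lowerCopy_upperCopy (d : A × Fin (Fintype.card A - 1)) :
    (starSys I).prefB (Sum.inr d) (lowerCopy d) (upperCopy d) :=
  ⟨rfl, rfl, rfl, rfl⟩

theorem starSys_prefA_upperCopy {d : A × Fin (Fintype.card A - 1)} {w : BStar A B}
    (hE : (starSys I).E (upperCopy d) w) (hw : w ≠ Sum.inr d) :
    (starSys I).prefA (upperCopy d) (Sum.inr d) w := by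
  rcases w with b | d'
  · exact ⟨rfl, rfl⟩
  · obtain ⟨ha, hd' | hd'⟩ := hE
    · exact ⟨rfl, ha, rfl, hd'.symm⟩
    · have : d' = d := Prod.ext ha.symm (Fin.ext (Nat.succ.inj hd').symm)
      exact absurd (congrArg Sum.inr this) hw

theorem IsStable.lowerCopy_mem_of_upperCopy_mem (hS : IsStable (starSys I) S)
    {d : A × Fin (Fintype.card A - 1)} {w : BStar A B} (hw : (upperCopy d, w) ∈ S)
    (hne : w ≠ Sum.inr d) :
    (lowerCopy d, Sum.inr d) ∈ S := by
  by_contra hlower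
  have hupper : (upperCopy d, Sum.inr d) ∈ S := by
    refine hS.mem_of_forall_pref (starSys_E_inr_iff.2 (.inr rfl))
      (fun w' hw' => starSys_prefA_upperCopy (hS.1.edge hw')) fun x hx hx' => ?_
    rcases starSys_E_inr_iff.1 (hS.1.edge hx) with rfl | rfl
    · exact absurd hx hlower
    · exact absurd rfl hx'
  exact hne (hS.1.right_unique hw hupper)

theorem IsStable.lowerCopy_mem_of_forall_eq (hS : IsStable (starSys I) S)
    {d : A × Fin (Fintype.card A - 1)}
    (h : ∀ w, (lowerCopy d, w) ∈ S → w = Sum.inr d) :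
    (lowerCopy d, Sum.inr d) ∈ S := by
  refine hS.mem_of_forall_pref (starSys_E_inr_iff.2 (.inl rfl))
    (fun w hw hne => absurd (h w hw) hne) fun x hx hne => ?_
  rcases starSys_E_inr_iff.1 (hS.1.edge hx) with rfl | rfl
  · exact absurd rfl hne
  · exact starSys_prefB_lowerCopy_upperCopy d

theorem IsStable.lowerCopy_mem_of_lt (hS : IsStable (starSys I) S) {k : Fin (Fintype.card A)}
    (hk : ((a, k), Sum.inl b) ∈ S) (j : Fin (Fintype.card A - 1)) (hjk : (j : ℕ) < k) :
    (lowerCopy (a, j), Sum.inr (a, j)) ∈ S := by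
  rcases Nat.succ_le_iff.2 hjk |>.eq_or_lt with hjk' | hjk'
  · have hcopy : (a, k) = upperCopy (a, j) := Prod.ext rfl (Fin.ext hjk'.symm)
    exact hS.lowerCopy_mem_of_upperCopy_mem (hcopy ▸ hk) Sum.inl_ne_inr
  · have hnext := hS.lowerCopy_mem_of_lt hk ⟨j + 1, by omega⟩ hjk'
    exact hS.lowerCopy_mem_of_upperCopy_mem (d := (a, j)) hnext (by simp [Fin.ext_iff])
termination_by (k : ℕ) - j

theorem IsStable.lowerCopy_mem_of_forall_le_notMem (hS : IsStable (starSys I) S)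
    (j : Fin (Fintype.card A - 1))
    (h : ∀ i : Fin (Fintype.card A), (i : ℕ) ≤ j → ∀ b : B, ((a, i), Sum.inl b) ∉ S) :
    (lowerCopy (a, j), Sum.inr (a, j)) ∈ S := by
  refine hS.lowerCopy_mem_of_forall_eq fun w hw => ?_
  rcases w with b | d
  · exact absurd hw (h _ le_rfl b)
  rcases starSys_E_inr_iff.1 (hS.1.edge hw) with hd | hd
  · rw [lowerCopy_injective hd]
  · obtain ⟨a', i⟩ := d
    obtain rfl : a = a' := congrArg Prod.fst hd
    have hij : (j : ℕ) = i + 1 := congrArg (fun x : AStar A => (x.2 : ℕ)) hd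
    have hprev : (lowerCopy (a, i), Sum.inr (a, i)) ∈ S :=
      hS.lowerCopy_mem_of_forall_le_notMem i fun l hl => h l (by omega)
    rw [hd] at hw
    exact absurd (hS.1.left_unique hprev hw) (lowerCopy_ne_upperCopy _)
termination_by (j : ℕ)

end Dummies

section Levels

variable [Fintype A] {I : PrefSys A B} {S : Finset (AStar A × BStar A B)} {a : A} {b : B}

theorem AtLevelA.lt_card {i : ℕ} (ha : AtLevelA S a i) : i < Fintype.card A := by
  rcases ha with ⟨hi, -⟩ | ⟨hi, -⟩ <;> omega

theorem AtLevelA.lowerCopy_mem {i : ℕ} (ha : AtLevelA S a i) (hS : IsStable (starSys I) S)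
    {j : Fin (Fintype.card A - 1)} (hji : (j : ℕ) < i) :
    (lowerCopy (a, j), Sum.inr (a, j)) ∈ S := by
  rcases ha with ⟨-, k, rfl, b, hk⟩ | ⟨hi, hnone⟩
  · exact hS.lowerCopy_mem_of_lt hk j hji
  · exact hS.lowerCopy_mem_of_forall_le_notMem j fun l hl => hnone l (by omega)

theorem IsStable.atLevelA_of_mem (hS : IsStable (starSys I) S) {k : Fin (Fintype.card A)}
    (hk : ((a, k), Sum.inl b) ∈ S) : AtLevelA S a k := by
  rcases Nat.succ_le_iff.2 k.isLt |>.eq_or_lt with hlast | hlt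
  · refine .inr ⟨hlast, fun l hl b' hb' => ?_⟩
    have hdummy := hS.lowerCopy_mem_of_lt hk ⟨l, by omega⟩ (show (l : ℕ) < k by omega)
    exact Sum.inl_ne_inr (hS.1.right_unique hb' hdummy)
  · exact .inl ⟨hlt, k, rfl, b, hk⟩

theorem AtLevelB.eq_of_mem {j : ℕ} (hb : AtLevelB S b j) (hS : IsStable (starSys I) S)
    {k : Fin (Fintype.card A)} (hk : ((a, k), Sum.inl b) ∈ S) : (k : ℕ) = j := by
  rcases hb with ⟨-, -, l, rfl, a', -, hl⟩ | ⟨rfl, hnone⟩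
  · exact congrArg (fun x : AStar A => (x.2 : ℕ)) (hS.1.left_unique hk hl)
  · by_contra hk0
    exact hnone k (Nat.one_le_iff_ne_zero.2 hk0) a (hS.atLevelA_of_mem hk) hk

theorem IsStable.exists_mem_of_lowerCopy_mem (hS : IsStable (starSys I) S) (hab : I.E a b)
    {j : Fin (Fintype.card A - 1)} (hj : (lowerCopy (a, j), Sum.inr (a, j)) ∈ S) :
    ∃ (a' : A) (k : Fin (Fintype.card A)), ((a', k), Sum.inl b) ∈ S ∧ (j : ℕ) ≤ k := by
  by_contra! hlow
  have hmem : (lowerCopy (a, j), Sum.inl b) ∈ S := by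
    refine hS.mem_of_forall_pref hab (fun w hw _ => ?_) fun x hx _ => .inl (hlow x.1 x.2 hx)
    obtain rfl := hS.1.right_unique hj hw
    exact ⟨rfl, rfl⟩
  exact Sum.inl_ne_inr (hS.1.right_unique hmem hj)

end Levels

theorem stmt6_general {A B : Type*} [Fintype A] (I : PrefSys A B)
    (S : Finset (AStar A × BStar A B)) (hS : IsStable (starSys I) S)
    (i j : ℕ) (a : A) (b : B) (ha : AtLevelA S a i) (hb : AtLevelB S b j) (hij : j + 2 ≤ i) :
    ¬ I.E a b := by
  intro hab
  have hi := ha.lt_card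
  have hdummy := ha.lowerCopy_mem hS (j := ⟨i - 1, by omega⟩) (show i - 1 < i by omega)
  obtain ⟨a', k, hk, hik⟩ := hS.exists_mem_of_lowerCopy_mem hab hdummy
  have hkj : (k : ℕ) = j := hb.eq_of_mem hS hk
  exact absurd (show i - 1 ≤ k from hik) (by omega)

/-- For a stable matching `S` in `G*` with level partitions as above:
`G` has no edge `(a,b)` with `a ∈ A_i` and `b ∈ B_j` where `i ≥ j + 2`. -/
theorem stmt6 {A B : Type*} [Fintype A] [Fintype B] [DecidableEq A] [DecidableEq B]
    (I : PrefSys A B) (hI : I.IsValid)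
    (S : Finset (AStar A × BStar A B)) (hS : IsStable (starSys I) S) :
    ∀ (i j : ℕ) (a : A) (b : B), AtLevelA S a i → AtLevelB S b j → j + 2 ≤ i →
      ¬ I.E a b :=
  stmt6_general I S hS

end PopMax
end
end

section
/- Let S be a stable matching in G*. Then for every a ∈ A, each of the nodes a_0, …, a_{n0−2} and d_1(a), …, d_{n0−1}(a) is matched in S, and at most one node among a_0, …, a_{n0−1} is matched in S to a neighbor in B̃. Consequently, S' is a matching in G. -/
open Classical

noncomputable section

namespace PopMax

variable {A B : Type*}

/-!
In a stable matching every node that is the first choice of one of its neighbors is matched. In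
`G*` the node `d_i(a)` is the first choice of `a_i`, and `a_{i-1}` is the first choice of `d_i(a)`,
so all dummy nodes and all of `a_0, …, a_{n0-2}` are matched. The `n0 - 1` dummy nodes of `a` are
adjacent only to copies of `a`, hence occupy all but one of the `n0` copies, leaving at most one to
be matched into `B̃`. So two edges of `S'` at `a` come from the same copy of `a` and coincide.
-/

theorem IsMatching.eq_of_mem_of_mem_left {I : PrefSys A B} {M : Finset (A × B)}
    (hM : IsMatching I M) {a : A} {b b' : B} (h : (a, b) ∈ M) (h' : (a, b') ∈ M) : b = b' :=
  congrArg Prod.snd (hM.2.1 _ h _ h' rfl)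

theorem IsMatching.eq_of_mem_of_mem_right {I : PrefSys A B} {M : Finset (A × B)}
    (hM : IsMatching I M) {a a' : A} {b : B} (h : (a, b) ∈ M) (h' : (a', b) ∈ M) : a = a' :=
  congrArg Prod.fst (hM.2.2 _ h _ h' rfl)

/-- `b` is the first choice of `a`: a neighbor that `a` prefers to all its other neighbors.
Stable matchings cover such a `b`. -/
def IsFirstChoiceA (I : PrefSys A B) (a : A) (b : B) : Prop :=
  I.E a b ∧ ∀ b', I.E a b' → b' ≠ b → I.prefA a b b'

/-- `a` is the first choice of `b`: a neighbor that `b` prefers to all its other neighbors.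
Stable matchings cover such an `a`. -/
def IsFirstChoiceB (I : PrefSys A B) (b : B) (a : A) : Prop :=
  I.E a b ∧ ∀ a', I.E a' b → a' ≠ a → I.prefB b a a'

theorem IsStable.matchedB_of_isFirstChoiceA {I : PrefSys A B} {S : Finset (A × B)}
    (hS : IsStable I S) {a : A} {b : B} (hab : IsFirstChoiceA I a b) : matchedB S b := by
  by_contra hb
  have hne : ∀ {b'}, (a, b') ∈ S → b' ≠ b := by
    rintro b' h rfl
    exact hb ⟨a, h⟩
  refine hS.2 a b ⟨hab.1, fun h => hne h rfl, ?_, Or.inl hb⟩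
  rw [or_iff_not_imp_left, not_not]
  rintro ⟨b', h⟩
  exact ⟨b', h, hab.2 b' (hS.1.1 _ h) (hne h)⟩

theorem IsStable.matchedA_of_isFirstChoiceB {I : PrefSys A B} {S : Finset (A × B)}
    (hS : IsStable I S) {a : A} {b : B} (hba : IsFirstChoiceB I b a) : matchedA S a := by
  by_contra ha
  have hne : ∀ {a'}, (a', b) ∈ S → a' ≠ a := by
    rintro a' h rfl
    exact ha ⟨b, h⟩
  refine hS.2 a b ⟨hba.1, fun h => hne h rfl, Or.inl ha, ?_⟩
  rw [or_iff_not_imp_left, not_not]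
  rintro ⟨a', h⟩
  exact ⟨a', h, hba.2 a' (hS.1.1 _ h) (hne h)⟩

theorem eq_of_notMem_range_of_injective {α β : Type*} [Fintype α] [Fintype β] {f : α → β}
    (hf : Function.Injective f) (hcard : Fintype.card β ≤ Fintype.card α + 1) {x y : β}
    (hx : x ∉ Set.range f) (hy : y ∉ Set.range f) : x = y := by
  have hcompl : (Finset.univ.image f)ᶜ.card ≤ 1 := by
    rw [Finset.card_compl, Finset.card_image_of_injective _ hf, Finset.card_univ]
    omega
  exact Finset.card_le_one.mp hcompl x (by simpa using hx) y (by simpa using hy)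

section Star

variable [Fintype A] {I : PrefSys A B} {S : Finset (AStar A × BStar A B)}

theorem isFirstChoiceA_dummy (a : A) {i : Fin (Fintype.card A)} {j : Fin (Fintype.card A - 1)}
    (hij : (i : ℕ) = j + 1) : IsFirstChoiceA (starSys I) (a, i) (Sum.inr (a, j)) := by
  refine ⟨⟨rfl, Or.inr hij⟩, ?_⟩
  rintro (b | ⟨a', j'⟩) hE hne
  · exact ⟨rfl, hij.symm⟩
  · obtain ⟨rfl, hj' | hj'⟩ := hE
    · exact ⟨rfl, rfl, hij.symm, hj'.symm⟩
    · have hjj' : j' = j := Fin.ext (by omega)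
      exact absurd (by rw [hjj']) hne

theorem isFirstChoiceB_dummy (a : A) {i : Fin (Fintype.card A)} {j : Fin (Fintype.card A - 1)}
    (hij : (i : ℕ) = j) : IsFirstChoiceB (starSys I) (Sum.inr (a, j)) (a, i) := by
  refine ⟨⟨rfl, Or.inl hij⟩, ?_⟩
  rintro ⟨a', i'⟩ ⟨rfl, hi' | hi'⟩ hne
  · have hii' : i' = i := Fin.ext (hi'.trans hij.symm)
    exact absurd (by rw [hii']) hne
  · exact ⟨rfl, rfl, hij, hi'⟩

theorem IsStable.matchedB_dummy (hS : IsStable (starSys I) S) (a : A)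
    (j : Fin (Fintype.card A - 1)) : matchedB S (Sum.inr (a, j)) :=
  hS.matchedB_of_isFirstChoiceA <|
    isFirstChoiceA_dummy a (i := ⟨j + 1, Nat.add_lt_of_lt_sub j.isLt⟩) rfl

theorem IsStable.matchedA_copy (hS : IsStable (starSys I) S) (a : A) {i : Fin (Fintype.card A)}
    (hi : (i : ℕ) + 1 < Fintype.card A) : matchedA S (a, i) :=
  hS.matchedA_of_isFirstChoiceB <|
    isFirstChoiceB_dummy a (j := ⟨i, Nat.lt_sub_of_add_lt hi⟩) rfl

theorem IsMatching.index_eq_of_mem_inl (hS : IsMatching (starSys I) S) {a : A}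
    (hdummy : ∀ j, matchedB S (Sum.inr (a, j))) {i i' : Fin (Fintype.card A)} {b b' : B}
    (h : ((a, i), Sum.inl b) ∈ S) (h' : ((a, i'), Sum.inl b') ∈ S) : i = i' := by
  have hcopy : ∀ j, ∃ k, ((a, k), Sum.inr (a, j)) ∈ S := by
    intro j
    obtain ⟨⟨a', k⟩, hk⟩ := hdummy j
    obtain ⟨rfl, -⟩ := hS.1 _ hk
    exact ⟨k, hk⟩
  choose f hf using hcopy
  have hinj : Function.Injective f := by
    intro j j' hjj'
    have hdummies := hS.eq_of_mem_of_mem_left (hf j) (hjj' ▸ hf j')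
    exact congrArg Prod.snd (Sum.inr_injective hdummies)
  have hnotMem : ∀ {k b}, ((a, k), Sum.inl b) ∈ S → k ∉ Set.range f := by
    rintro _ b hb ⟨j, rfl⟩
    exact Sum.inl_ne_inr (hS.eq_of_mem_of_mem_left hb (hf j))
  refine eq_of_notMem_range_of_injective hinj ?_ (hnotMem h) (hnotMem h')
  simp only [Fintype.card_fin]
  omega

theorem mem_proj [Fintype B] {a : A} {b : B} :
    (a, b) ∈ proj S ↔ ∃ i, ((a, i), Sum.inl b) ∈ S := by
  simp only [proj, Finset.mem_filter, Finset.mem_univ, true_and]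

theorem IsMatching.proj [Fintype B] (hS : IsMatching (starSys I) S)
    (hcopy : ∀ (a : A) (i i' : Fin (Fintype.card A)) (b b' : B),
      ((a, i), Sum.inl b) ∈ S → ((a, i'), Sum.inl b') ∈ S → i = i') :
    IsMatching I (proj S) := by
  refine ⟨?_, ?_, ?_⟩
  · rintro ⟨a, b⟩ hab
    obtain ⟨i, hi⟩ := mem_proj.mp hab
    exact hS.1 _ hi
  · rintro ⟨a, b⟩ hab ⟨_, b'⟩ hab' rfl
    obtain ⟨i, hi⟩ := mem_proj.mp hab
    obtain ⟨i', hi'⟩ := mem_proj.mp hab'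
    obtain rfl := hcopy a i i' b b' hi hi'
    rw [Sum.inl_injective (hS.eq_of_mem_of_mem_left hi hi')]
  · rintro ⟨a, b⟩ hab ⟨a', _⟩ hab' rfl
    obtain ⟨i, hi⟩ := mem_proj.mp hab
    obtain ⟨i', hi'⟩ := mem_proj.mp hab'
    obtain ⟨rfl, -⟩ := Prod.mk.inj (hS.eq_of_mem_of_mem_right hi hi')
    rfl

end Star

theorem stmt10_general [Fintype A] [Fintype B] (I : PrefSys A B)
    (S : Finset (AStar A × BStar A B)) (hS : IsStable (starSys I) S) :
    (∀ (a : A) (i : Fin (Fintype.card A)), (i : ℕ) + 1 < Fintype.card A → matchedA S (a, i)) ∧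
    (∀ (a : A) (j : Fin (Fintype.card A - 1)), matchedB S (Sum.inr (a, j))) ∧
    (∀ (a : A) (i i' : Fin (Fintype.card A)) (b b' : B),
        ((a, i), Sum.inl b) ∈ S → ((a, i'), Sum.inl b') ∈ S → i = i') ∧
    IsMatching I (proj S) := by
  have hcopy : ∀ (a : A) (i i' : Fin (Fintype.card A)) (b b' : B),
      ((a, i), Sum.inl b) ∈ S → ((a, i'), Sum.inl b') ∈ S → i = i' :=
    fun a _ _ _ _ => hS.1.index_eq_of_mem_inl (hS.matchedB_dummy a)
  exact ⟨fun a _ => hS.matchedA_copy a, hS.matchedB_dummy, hcopy, hS.1.proj hcopy⟩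

/-- For a stable matching `S` in `G*` and every `a ∈ A`: each of the
nodes `a_0, …, a_{n0−2}` and each dummy node `d_1(a), …, d_{n0−1}(a)` is matched in `S`,
and at most one node among `a_0, …, a_{n0−1}` is matched in `S` to a neighbor in `B̃`.
Consequently `S'` is a matching in `G`. -/
theorem stmt10 {A B : Type*} [Fintype A] [Fintype B] [DecidableEq A] [DecidableEq B]
    (I : PrefSys A B) (hI : I.IsValid)
    (S : Finset (AStar A × BStar A B)) (hS : IsStable (starSys I) S) :
    (∀ (a : A) (i : Fin (Fintype.card A)), (i : ℕ) + 1 < Fintype.card A →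
        ∃ w : BStar A B, (((a, i) : AStar A), w) ∈ S) ∧
    (∀ (a : A) (j : Fin (Fintype.card A - 1)),
        ∃ x : AStar A, (x, (Sum.inr (a, j) : BStar A B)) ∈ S) ∧
    (∀ (a : A) (i i' : Fin (Fintype.card A)) (b b' : B),
        (((a, i) : AStar A), (Sum.inl b : BStar A B)) ∈ S →
        (((a, i') : AStar A), (Sum.inl b' : BStar A B)) ∈ S → i = i') ∧
    IsMatching I (proj S) :=
  stmt10_general I S hS

end PopMax
end
end
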